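/- For |q|<1, with k = q·R(q)·R(q^2)^2 where R(q) = (q, q^4; q^5)_∞/(q^2, q^3; q^5)_∞, and φ(q) = ∑_{n∈ℤ} q^{n^2}, one has φ(−q)^2/φ(−q^5)^2 = (1 − 4k − k^2)/(1 − k^2). -/

import Mathlib

/-!
Write `a_j = f(-q^j, -q^(10-j)) = ∑ (-1)^n q^(5n² + (5-j)n)`, which is `thA q (5 - j)`.
Three facts combine to give the identity.

* By the Jacobi triple product, `a_j = (q^10; q^10)_∞ (q^j, q^(10-j); q^10)_∞`. Splitting the products
  in base `q^5` into products in base `q^10`, this yields `k = q a₁a₂ / (a₃a₄)`.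
* The three-term theta relation `a₃²a₄² - q²a₁²a₂² = a₂a₄a₅²` (`theta_relation`), which says
  `1 - k² = a₂a₅² / (a₃²a₄)`. It follows by expanding products of two theta series in terms of
  the series `∑ q^(10n² + dn)`.
* `φ(-q^5) = a₅` and `φ(-q)² = a₅² - 4q a₁a₃` (`phi_sq_dissection`), which comes from
  summing `(-q)^(x²+y²)` over the Gaussian integers by residue modulo `2 + i`.

Hence `φ(-q)² / φ(-q^5)² = 1 - 4q a₁a₃ / a₅²`, and `q a₁a₃ / a₅² = k / (1 - k²)`.
All the `a_j` are nonzero by their product formulas. The triple product itself is the limit of its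
finite form, in which the coefficients are Gaussian binomial coefficients. The case `q = 0`, where
integer powers of `q` take junk values, is treated separately.
-/

noncomputable def qp (a q : ℂ) : ℂ := ∏' k : ℕ, (1 - a * q ^ k)

noncomputable def GG (q : ℂ) : ℂ := 1 / (qp q (q ^ 5) * qp (q ^ 4) (q ^ 5))

noncomputable def HH (q : ℂ) : ℂ := 1 / (qp (q ^ 2) (q ^ 5) * qp (q ^ 3) (q ^ 5))

noncomputable def RR (q : ℂ) : ℂ :=
  (qp q (q ^ 5) * qp (q ^ 4) (q ^ 5)) / (qp (q ^ 2) (q ^ 5) * qp (q ^ 3) (q ^ 5))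

noncomputable def phi (q : ℂ) : ℂ := ∑' n : ℤ, q ^ (n.natAbs ^ 2)

noncomputable def psi (q : ℂ) : ℂ := ∑' n : ℕ, q ^ (n * (n + 1) / 2)

/-! ### Theta series -/

/-- The theta series `∑ (-1)^n q^(5n²+cn)`, which is Ramanujan's `f(-q^(5+c), -q^(5-c))`.
Exponents are integers, so that only `q ≠ 0` gives the intended series. -/
noncomputable def thA (q : ℂ) (c : ℤ) : ℂ := ∑' n : ℤ, (-1) ^ n * q ^ (5 * n ^ 2 + c * n)

/-- The theta series `∑ q^(10n²+dn)`, which is Ramanujan's `f(q^(10+d), q^(10-d))`. -/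
noncomputable def thB (q : ℂ) (d : ℤ) : ℂ := ∑' n : ℤ, q ^ (10 * n ^ 2 + d * n)

lemma summable_norm_theta {q : ℂ} (hq0 : q ≠ 0) (hq : ‖q‖ < 1) {a : ℤ} (ha : 0 < a) (c : ℤ) :
    Summable fun n : ℤ => ‖q ^ (a * n ^ 2 + c * n)‖ := by
  have hr0 : 0 < ‖q‖ := norm_pos_iff.2 hq0
  have hs : Summable fun n : ℤ => ‖q‖ ^ n.natAbs := by
    apply Summable.of_nat_of_neg
    · simpa using summable_geometric_of_lt_one hr0.le hq
    · simpa using summable_geometric_of_lt_one hr0.le hq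
  refine Summable.of_nonneg_of_le (fun _ => norm_nonneg _) (fun n => ?_)
    (hs.mul_left (‖q‖ ^ (-(|c| + 1) ^ 2)))
  rw [norm_zpow, ← zpow_natCast ‖q‖ n.natAbs, ← zpow_add₀ hr0.ne']
  refine zpow_le_zpow_right_of_le_one₀ hr0 hq.le ?_
  rw [Int.natCast_natAbs]
  have h1 : -(|c| * |n|) ≤ c * n := by rw [← abs_mul]; exact neg_abs_le _
  have h2 : n ^ 2 ≤ a * n ^ 2 := le_mul_of_one_le_left (sq_nonneg n) ha
  rw [← sq_abs n] at h2 ⊢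
  nlinarith [sq_nonneg (|c| + 1 - |n|), abs_nonneg n, abs_nonneg c]

lemma summable_thA {q : ℂ} (hq0 : q ≠ 0) (hq : ‖q‖ < 1) (c : ℤ) :
    Summable fun n : ℤ => ‖(-1 : ℂ) ^ n * q ^ (5 * n ^ 2 + c * n)‖ := by
  simpa using summable_norm_theta hq0 hq (by norm_num : (0 : ℤ) < 5) c

lemma thA_neg (q : ℂ) (c : ℤ) : thA q (-c) = thA q c := by
  unfold thA
  rw [← (Equiv.neg ℤ).tsum_eq]
  refine tsum_congr fun n => ?_
  simp [zpow_neg, ← inv_zpow]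

lemma thB_neg (q : ℂ) (c : ℤ) : thB q (-c) = thB q c := by
  unfold thB
  rw [← (Equiv.neg ℤ).tsum_eq]
  refine tsum_congr fun n => ?_
  simp

/-- Sum over `ℤ × ℤ` according to the residue of `x - l * y` modulo `M`. -/
lemma tsum_dissect {f : ℤ × ℤ → ℂ} (hf : Summable f) (l : ℤ) (M : ℕ) [NeZero M] :
    ∑' z, f z = ∑ r : Fin M, ∑' z : ℤ × ℤ, f (l * z.1 + z.2 * M + (r : ℕ), z.1) := by
  let s : ℤ × ℤ ≃ ℤ × ℤ :=
    { toFun := fun z => (l * z.1 + z.2, z.1)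
      invFun := fun z => (z.2, z.1 - l * z.2)
      left_inv := fun z => by simp
      right_inv := fun z => by simp }
  let e : Fin M × (ℤ × ℤ) ≃ ℤ × ℤ :=
    ((((Equiv.prodComm _ _).trans (Equiv.prodAssoc ℤ ℤ (Fin M))).trans
      ((Equiv.refl ℤ).prodCongr (Int.divModEquiv M).symm))).trans s
  have hs : Summable (f ∘ e) := e.summable_iff.2 hf
  rw [← e.tsum_eq, show ∑' c, f (e c) = ∑' c, (f ∘ e) c from rfl, hs.tsum_prod, tsum_fintype]
  refine Finset.sum_congr rfl fun r _ => tsum_congr fun z => ?_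
  simp [e, s, Int.divModEquiv, add_assoc]

/-- Product formula for theta series: the terms of the double series whose indices `m`, `n` have
the same parity are rewritten with `m = u + v`, `n = u - v`, those of opposite parity with
`m = u + v + 1`, `n = u - v`. -/
lemma thA_mul_thA {q : ℂ} (hq0 : q ≠ 0) (hq : ‖q‖ < 1) (c d : ℤ) :
    thA q c * thA q d = thB q (c + d) * thB q (c - d)
      - q ^ (5 + c) * (thB q (10 + c + d) * thB q (10 + c - d)) := by
  have hB := summable_norm_theta hq0 hq (by norm_num : (0 : ℤ) < 10)
  unfold thA thB
  rw [tsum_mul_tsum_of_summable_norm (summable_thA hq0 hq c) (summable_thA hq0 hq d),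
    tsum_mul_tsum_of_summable_norm (hB _) (hB _), tsum_mul_tsum_of_summable_norm (hB _) (hB _),
    tsum_dissect (summable_mul_of_summable_norm (summable_thA hq0 hq c) (summable_thA hq0 hq d))
      1 2, Fin.sum_univ_two, ← tsum_mul_left, sub_eq_add_neg, ← tsum_neg]
  let s : ℤ × ℤ ≃ ℤ × ℤ :=
    { toFun := fun z => (z.1 - z.2, z.2)
      invFun := fun z => (z.1 + z.2, z.2)
      left_inv := fun z => by simp
      right_inv := fun z => by simp }
  congr 1
  · rw [← s.tsum_eq]
    refine tsum_congr fun ⟨u, v⟩ => ?_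
    simp only [s, Equiv.coe_fn_mk]
    rw [mul_mul_mul_comm, ← zpow_add₀ (by norm_num), ← zpow_add₀ hq0, ← zpow_add₀ hq0,
      Even.neg_one_zpow ⟨u, by push_cast; simp; ring⟩, one_mul]
    congr 1
    simp
    ring
  · rw [← s.tsum_eq]
    refine tsum_congr fun ⟨u, v⟩ => ?_
    simp only [s, Equiv.coe_fn_mk]
    rw [mul_mul_mul_comm, ← zpow_add₀ (by norm_num), ← zpow_add₀ hq0, ← zpow_add₀ hq0,
      ← zpow_add₀ hq0, Odd.neg_one_zpow ⟨u, by push_cast; simp; ring⟩, neg_one_mul]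
    congr 2
    simp
    ring

/-- An instance of the Weierstrass three-term relation. Expanding every product of two
series `thA` in series `thB`, both sides become the same polynomial in `thB q d`. -/
lemma theta_relation {q : ℂ} (hq0 : q ≠ 0) (hq : ‖q‖ < 1) :
    (thA q 2 * thA q 1) ^ 2 - (q * (thA q 4 * thA q 3)) ^ 2
      = thA q 3 * thA q 1 * thA q 0 ^ 2 := by
  have key := fun c d => thA_mul_thA hq0 hq (-c) (-d)
  simp only [thA_neg] at key
  have h22 := key 2 2
  have h11 := key 1 1
  have h44 := key 4 4
  have h33 := key 3 3
  have h00 := key 0 0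
  have h31 := key 3 1
  norm_num [thB_neg] at h22 h11 h44 h33 h00 h31
  have n4 := thB_neg q 4
  have n8 := thB_neg q 8
  have n2 := thB_neg q 2
  have n6 := thB_neg q 6
  rw [mul_pow, mul_pow, mul_pow, sq (thA q 2), sq (thA q 1), sq (thA q 4), sq (thA q 3),
    sq (thA q 0), h22, h11, h44, h33, h00, h31]
  ring

lemma phi_neg_eq (q : ℂ) : phi (-q) = ∑' n : ℤ, (-1) ^ n * q ^ (n ^ 2) := by
  unfold phi
  refine tsum_congr fun n => ?_
  have h : ((n.natAbs ^ 2 : ℕ) : ℤ) = n ^ 2 := by simp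
  rw [neg_pow, ← zpow_natCast q, h]
  congr 1
  rw [← zpow_natCast, h]
  rcases Int.even_or_odd n with hn | hn
  · rw [hn.neg_one_zpow, (hn.pow_of_ne_zero two_ne_zero).neg_one_zpow]
  · rw [hn.neg_one_zpow, hn.pow.neg_one_zpow]

lemma phi_neg_pow_five (q : ℂ) : phi (-(q ^ 5)) = thA q 0 := by
  rw [phi_neg_eq]
  unfold thA
  refine tsum_congr fun n => ?_
  rw [← zpow_natCast q, ← zpow_mul]
  simp

/-- The two-square series `∑ (-q)^(x²+y²)` dissected modulo the Gaussian prime `2 + i`. The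
multiples `(2 + i)w` contribute `φ(-q^5)²`. Multiplication by `i` permutes the four nonzero residue
classes, so each of them contributes as much as the class of `z = 1 + (2 + i)w`, whose norm is
`1 + 5a² + 4a + 5b² - 2b` for `w = a + bi`. -/
lemma phi_sq_dissection {q : ℂ} (hq0 : q ≠ 0) (hq : ‖q‖ < 1) :
    phi (-q) ^ 2 = thA q 0 ^ 2 - 4 * (q * (thA q 4 * thA q 2)) := by
  have h1 : Summable fun n : ℤ => ‖(-1 : ℂ) ^ n * q ^ (n ^ 2)‖ := by
    simpa using summable_norm_theta hq0 hq one_pos 0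
  rw [← thA_neg q 2, phi_neg_eq, sq, tsum_mul_tsum_of_summable_norm h1 h1,
    tsum_dissect (summable_mul_of_summable_norm h1 h1) 2 5, Fin.sum_univ_five]
  unfold thA
  rw [sq, tsum_mul_tsum_of_summable_norm (summable_thA hq0 hq 0) (summable_thA hq0 hq 0),
    tsum_mul_tsum_of_summable_norm (summable_thA hq0 hq 4) (summable_thA hq0 hq (-2)),
    ← tsum_mul_left]
  set S := ∑' z : ℤ × ℤ, q * ((-1 : ℂ) ^ z.1 * q ^ (5 * z.1 ^ 2 + 4 * z.1) *
    ((-1) ^ z.2 * q ^ (5 * z.2 ^ 2 + -2 * z.2))) with hS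
  -- Residue `r = x - 2y` modulo 5, with `(y, t)` standing for `x = 2y + 5t + r`. The maps below
  -- parametrise the class of `r` by `w = a + bi`: `s0` by `(2 + i)w` (for `r = 0`) and
  -- `1 + (2 + i)w` (for `r = 1`), and `s4`, `s2`, `s3` by `i^k (1 + (2 + i)w)`, `k = 2, 3, 1`.
  let s0 : ℤ × ℤ ≃ ℤ × ℤ :=
    { toFun := fun z => (z.1 + 2 * z.2, -z.2)
      invFun := fun z => (z.1 + 2 * z.2, -z.2)
      left_inv := fun z => by simp
      right_inv := fun z => by simp }
  let s4 : ℤ × ℤ ≃ ℤ × ℤ :=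
    { toFun := fun z => (-z.1 - 2 * z.2, z.2 - 1)
      invFun := fun z => (-z.1 - 2 * (z.2 + 1), z.2 + 1)
      left_inv := fun z => by ext <;> simp
      right_inv := fun z => by ext <;> simp }
  let s2 : ℤ × ℤ ≃ ℤ × ℤ :=
    { toFun := fun z => (-1 - 2 * z.1 + z.2, z.1)
      invFun := fun z => (z.2, z.1 + 1 + 2 * z.2)
      left_inv := fun z => by ext <;> simp; ring
      right_inv := fun z => by ext <;> simp }
  let s3 : ℤ × ℤ ≃ ℤ × ℤ :=
    { toFun := fun z => (1 + 2 * z.1 - z.2, -z.1 - 1)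
      invFun := fun z => (-z.2 - 1, 1 + 2 * (-z.2 - 1) - z.1)
      left_inv := fun z => by ext <;> simp
      right_inv := fun z => by ext <;> simp }
  have main : ∀ x y a b : ℤ, (∃ t, x + y = a + b + 1 + 2 * t) →
      x ^ 2 + y ^ 2 = 1 + 5 * a ^ 2 + 4 * a + 5 * b ^ 2 - 2 * b →
      (-1 : ℂ) ^ x * q ^ (x ^ 2) * ((-1) ^ y * q ^ (y ^ 2)) =
      -(q * ((-1 : ℂ) ^ a * q ^ (5 * a ^ 2 + 4 * a) * ((-1) ^ b * q ^ (5 * b ^ 2 + -2 * b)))) := by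
    rintro x y a b ⟨t, ht⟩ h
    rw [mul_mul_mul_comm, ← zpow_add₀ (by norm_num), ← zpow_add₀ hq0,
      mul_mul_mul_comm, ← zpow_add₀ (by norm_num), ← zpow_add₀ hq0, ht, h,
      zpow_add₀ (by norm_num : (-1 : ℂ) ≠ 0), (even_two_mul t).neg_one_zpow,
      zpow_add_one₀ (by norm_num : (-1 : ℂ) ≠ 0),
      show 1 + 5 * a ^ 2 + 4 * a + 5 * b ^ 2 - 2 * b
        = 1 + (5 * a ^ 2 + 4 * a + (5 * b ^ 2 + -2 * b)) by ring, zpow_one_add₀ hq0]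
    ring
  have e1 : ∀ r : Fin 5, ∀ s : ℤ × ℤ ≃ ℤ × ℤ,
      (∀ z, (∃ t, 2 * (s z).1 + (s z).2 * (5 : ℕ) + (r : ℕ) + (s z).1 = z.1 + z.2 + 1 + 2 * t) ∧
        (2 * (s z).1 + (s z).2 * (5 : ℕ) + (r : ℕ)) ^ 2 + (s z).1 ^ 2
          = 1 + 5 * z.1 ^ 2 + 4 * z.1 + 5 * z.2 ^ 2 - 2 * z.2) →
      ∑' z : ℤ × ℤ, (-1 : ℂ) ^ (2 * z.1 + z.2 * (5 : ℕ) + (r : ℕ)) *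
        q ^ ((2 * z.1 + z.2 * (5 : ℕ) + (r : ℕ)) ^ 2) * ((-1) ^ z.1 * q ^ (z.1 ^ 2)) = -S := by
    intro r s h
    rw [← s.tsum_eq, hS, ← tsum_neg]
    exact tsum_congr fun z => main _ _ _ _ (h z).1 (h z).2
  have r0 : ∑' z : ℤ × ℤ, (-1 : ℂ) ^ (2 * z.1 + z.2 * (5 : ℕ) + ((0 : Fin 5) : ℕ)) *
        q ^ ((2 * z.1 + z.2 * (5 : ℕ) + ((0 : Fin 5) : ℕ)) ^ 2) * ((-1) ^ z.1 * q ^ (z.1 ^ 2))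
        = ∑' z : ℤ × ℤ, (-1 : ℂ) ^ z.1 * q ^ (5 * z.1 ^ 2 + 0 * z.1) *
          ((-1) ^ z.2 * q ^ (5 * z.2 ^ 2 + 0 * z.2)) := by
    rw [← s0.tsum_eq]
    refine tsum_congr fun ⟨a, b⟩ => ?_
    simp only [s0, Equiv.coe_fn_mk]
    rw [mul_mul_mul_comm, ← zpow_add₀ (by norm_num), ← zpow_add₀ hq0,
      mul_mul_mul_comm, ← zpow_add₀ (by norm_num), ← zpow_add₀ hq0]
    congr 1
    · rw [show 2 * (a + 2 * b) + -b * ((5 : ℕ) : ℤ) + (((0 : Fin 5) : ℕ) : ℤ) + (a + 2 * b)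
        = (a + b) + 2 * a by simp; ring, zpow_add₀ (by norm_num : (-1 : ℂ) ≠ 0),
        (even_two_mul a).neg_one_zpow, mul_one]
    · congr 1
      simp
      ring
  rw [r0, e1 1 s0, e1 2 s2, e1 3 s3, e1 4 s4]
  · ring
  · rintro ⟨a, b⟩
    exact ⟨⟨-1 - 2 * a - b, by simp [s4]; ring⟩, by simp [s4]; ring⟩
  · rintro ⟨a, b⟩
    exact ⟨⟨-2 * b, by simp [s3]; ring⟩, by simp [s3]; ring⟩
  · rintro ⟨a, b⟩
    exact ⟨⟨-a - 1 + b, by simp [s2]; ring⟩, by simp [s2]; ring⟩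
  · rintro ⟨a, b⟩
    exact ⟨⟨a, by simp [s0]; ring⟩, by simp [s0]; ring⟩

/-! ### Infinite products -/

lemma summable_qp {p : ℂ} (hp : ‖p‖ < 1) (a : ℂ) : Summable fun k : ℕ => ‖-(a * p ^ k)‖ := by
  simpa using (summable_geometric_of_lt_one (norm_nonneg p) hp).mul_left ‖a‖

lemma multipliable_qp {p : ℂ} (hp : ‖p‖ < 1) (a : ℂ) :
    Multipliable fun k : ℕ => 1 - a * p ^ k := by
  simpa only [sub_eq_add_neg] using multipliable_one_add_of_summable (summable_qp hp a)

lemma one_sub_mul_pow_ne_zero {p a : ℂ} (hp : ‖p‖ < 1) (ha : ‖a‖ < 1) (k : ℕ) :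
    1 - a * p ^ k ≠ 0 := by
  intro h
  have h1 : ‖a * p ^ k‖ = 1 := by rw [← sub_eq_zero.1 h, norm_one]
  rw [norm_mul, norm_pow] at h1
  have h2 : ‖p‖ ^ k ≤ 1 := pow_le_one₀ (norm_nonneg _) hp.le
  nlinarith [norm_nonneg a]

lemma qp_ne_zero {p a : ℂ} (hp : ‖p‖ < 1) (ha : ‖a‖ < 1) : qp a p ≠ 0 := by
  have h := tprod_one_add_ne_zero_of_summable (f := fun k : ℕ => -(a * p ^ k))
    (fun k => by rw [← sub_eq_add_neg]; exact one_sub_mul_pow_ne_zero hp ha k) (summable_qp hp a)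
  simpa only [← sub_eq_add_neg, qp] using h

lemma qp_split {p : ℂ} (hp : ‖p‖ < 1) (a : ℂ) : qp a p = qp a (p ^ 2) * qp (a * p) (p ^ 2) := by
  have hp2 : ‖p ^ 2‖ < 1 := by
    rw [norm_pow]; exact pow_lt_one₀ (norm_nonneg _) hp two_ne_zero
  have h0 : ∀ k : ℕ, 1 - a * p ^ (2 * k) = 1 - a * (p ^ 2) ^ k := fun k => by rw [pow_mul]
  have h1 : ∀ k : ℕ, 1 - a * p ^ (2 * k + 1) = 1 - a * p * (p ^ 2) ^ k := fun k => by
    rw [← pow_mul]; ring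
  unfold qp
  rw [← tprod_even_mul_odd (f := fun k => 1 - a * p ^ k)]
  · simp only [h0, h1]
  · simpa only [h0] using multipliable_qp hp2 a
  · simpa only [h1] using multipliable_qp hp2 (a * p)

/-! ### The Jacobi triple product -/

/-- The finite product `(p; p)_n`. -/
noncomputable def qfac (p : ℂ) (n : ℕ) : ℂ := ∏ k ∈ Finset.range n, (1 - p * p ^ k)

/-- `1 / (p; p)_m` for an integer `m`, with the usual convention that it vanishes for `m < 0`. -/
noncomputable def invQfac (p : ℂ) (m : ℤ) : ℂ := if m < 0 then 0 else (qfac p m.toNat)⁻¹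

lemma qfac_ne_zero {p : ℂ} (hp : ‖p‖ < 1) (n : ℕ) : qfac p n ≠ 0 :=
  Finset.prod_ne_zero_iff.2 fun k _ => one_sub_mul_pow_ne_zero hp hp k

lemma tendsto_qfac {p : ℂ} (hp : ‖p‖ < 1) :
    Filter.Tendsto (qfac p) Filter.atTop (nhds (qp p p)) :=
  (multipliable_qp hp p).tendsto_prod_tprod_nat

/-- The recurrence of `1 / (p; p)_m`, valid for every integer `m`, including `m ≤ 0`. -/
lemma invQfac_sub_one {p : ℂ} (hp : ‖p‖ < 1) (m : ℤ) :
    invQfac p (m - 1) = (1 - p ^ m) * invQfac p m := by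
  unfold invQfac
  rcases lt_trichotomy m 0 with h | rfl | h
  · rw [if_pos h, if_pos (by omega), mul_zero]
  · simp
  · obtain ⟨k, rfl⟩ : ∃ k : ℕ, m = k + 1 := ⟨(m - 1).toNat, by omega⟩
    rw [if_neg (by omega), if_neg (by omega)]
    have h1 : ((k : ℤ) + 1 - 1).toNat = k := by omega
    have h2 : ((k : ℤ) + 1).toNat = k + 1 := by omega
    have h3 := one_sub_mul_pow_ne_zero hp hp k
    rw [h1, h2, qfac, qfac, Finset.prod_range_succ, mul_inv,
      show p ^ ((k : ℤ) + 1) = p * p ^ k by rw [← pow_succ']; exact_mod_cast zpow_natCast p (k + 1)]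
    field_simp

lemma tendsto_invQfac {p : ℂ} (hp : ‖p‖ < 1) :
    Filter.Tendsto (invQfac p) Filter.atTop (nhds (qp p p)⁻¹) := by
  have h := ((tendsto_qfac hp).inv₀ (qp_ne_zero hp hp)).comp
    (Filter.tendsto_atTop.2 fun b => (Filter.eventually_ge_atTop (b : ℤ)).mono fun m hm =>
      show b ≤ m.toNat by omega)
  refine h.congr' ?_
  filter_upwards [Filter.eventually_ge_atTop 0] with m hm
  simp [invQfac, not_lt.2 hm]

lemma exists_invQfac_bound {p : ℂ} (hp : ‖p‖ < 1) :
    ∃ D : ℝ, (∀ n, ‖qfac p n‖ ≤ D) ∧ ∀ m, ‖invQfac p m‖ ≤ D := by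
  obtain ⟨D₁, h₁⟩ := (tendsto_qfac hp).norm.bddAbove_range
  obtain ⟨D₂, h₂⟩ := ((tendsto_qfac hp).inv₀ (qp_ne_zero hp hp)).norm.bddAbove_range
  refine ⟨max D₁ D₂, fun n => le_max_of_le_left (h₁ ⟨n, rfl⟩), fun m => ?_⟩
  have h2 : ∀ n, ‖(qfac p n)⁻¹‖ ≤ max D₁ D₂ := fun n => le_max_of_le_right (h₂ ⟨n, rfl⟩)
  unfold invQfac
  split_ifs
  · rw [norm_zero]; exact (norm_nonneg _).trans (h2 0)
  · exact h2 _

/-- The coefficient of `w^n` in `∏_{k<N} (1 - w Q^(2k+1)) (1 - w⁻¹ Q^(2k+1))`, namely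
`(-1)^n Q^(n²)` times the Gaussian binomial coefficient `[2N, N+n]` in base `Q²`. It vanishes for
`|n| > N` by the convention in `invQfac`. -/
noncomputable def jtpCoeff (Q : ℂ) (N : ℕ) (n : ℤ) : ℂ :=
  (-1) ^ n * Q ^ (n ^ 2) * (qfac (Q ^ 2) (2 * N) * invQfac (Q ^ 2) (N + n) * invQfac (Q ^ 2) (N - n))

/-- The recurrence obtained by multiplying the finite product by its next factor
`(1 - wX)(1 - w⁻¹X) = (1 + X²) - X(w + w⁻¹)`, `X = Q^(2N+1)`. -/
lemma jtpCoeff_succ {Q : ℂ} (hQ0 : Q ≠ 0) (hQ : ‖Q‖ < 1) (N : ℕ) (n : ℤ) :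
    jtpCoeff Q (N + 1) n = (1 + (Q ^ (2 * N + 1)) ^ 2) * jtpCoeff Q N n
      - Q ^ (2 * N + 1) * (jtpCoeff Q N (n - 1) + jtpCoeff Q N (n + 1)) := by
  have hp : ‖Q ^ 2‖ < 1 := by
    rw [norm_pow]; exact pow_lt_one₀ (norm_nonneg _) hQ two_ne_zero
  have hm1 : (-1 : ℂ) ≠ 0 := by norm_num
  have hy : Q ^ n ≠ 0 := zpow_ne_zero _ hQ0
  have a1 := invQfac_sub_one hp (N + 1 + n)
  have a2 := invQfac_sub_one hp (N + n)
  have b1 := invQfac_sub_one hp (N + 1 - n)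
  have b2 := invQfac_sub_one hp (N - n)
  have hsq : ∀ m : ℤ, (Q ^ 2) ^ m = Q ^ (2 * m) := fun m => by rw [zpow_mul, zpow_ofNat]
  have hX : Q ^ (2 * N + 1) = Q ^ (2 * (N : ℤ) + 1) := by
    rw [← zpow_natCast]; push_cast; rfl
  have hy2 : (Q ^ n) ^ 2 = Q ^ (2 * n) := by rw [← zpow_ofNat, ← zpow_mul, mul_comm]
  have ea1 : (Q ^ 2) ^ ((N : ℤ) + 1 + n) = Q ^ (2 * N + 1) * Q * (Q ^ n) ^ 2 := by
    rw [hsq, hX, hy2, ← zpow_add_one₀ hQ0, ← zpow_add₀ hQ0]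
    congr 1
    ring
  have ea2 : (Q ^ 2) ^ ((N : ℤ) + n) = Q ^ (2 * N + 1) / Q * (Q ^ n) ^ 2 := by
    rw [hsq, hX, hy2, div_eq_mul_inv, ← zpow_sub_one₀ hQ0, ← zpow_add₀ hQ0]
    congr 1
    ring
  have eb1 : (Q ^ 2) ^ ((N : ℤ) + 1 - n) = Q ^ (2 * N + 1) * Q / (Q ^ n) ^ 2 := by
    rw [hsq, hX, hy2, ← zpow_add_one₀ hQ0, ← zpow_sub₀ hQ0]
    congr 1
    ring
  have eb2 : (Q ^ 2) ^ ((N : ℤ) - n) = Q ^ (2 * N + 1) / Q / (Q ^ n) ^ 2 := by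
    rw [hsq, hX, hy2, div_eq_mul_inv (Q ^ _) Q, ← zpow_sub_one₀ hQ0, ← zpow_sub₀ hQ0]
    congr 1
    ring
  have eP : qfac (Q ^ 2) (2 * (N + 1)) = qfac (Q ^ 2) (2 * N) *
      ((1 - (Q ^ (2 * N + 1)) ^ 2) * (1 - (Q ^ (2 * N + 1)) ^ 2 * Q ^ 2)) := by
    unfold qfac
    rw [show 2 * (N + 1) = 2 * N + 1 + 1 by ring, Finset.prod_range_succ, Finset.prod_range_succ]
    ring
  have em : Q ^ ((n - 1) ^ 2) = Q ^ (n ^ 2) * Q / (Q ^ n) ^ 2 := by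
    rw [hy2, ← zpow_add_one₀ hQ0, ← zpow_sub₀ hQ0]
    congr 1
    ring
  have ep : Q ^ ((n + 1) ^ 2) = Q ^ (n ^ 2) * Q * (Q ^ n) ^ 2 := by
    rw [hy2, ← zpow_add_one₀ hQ0, ← zpow_add₀ hQ0]
    congr 1
    ring
  rw [ea1] at a1
  rw [ea2] at a2
  rw [eb1] at b1
  rw [eb2] at b2
  unfold jtpCoeff
  rw [show (N : ℤ) + (n - 1) = N + n - 1 by ring, show (N : ℤ) - (n - 1) = N + 1 - n by ring,
    show (N : ℤ) + (n + 1) = N + 1 + n by ring, show (N : ℤ) - (n + 1) = N - n - 1 by ring,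
    a2, b2, show (N : ℤ) + n = N + 1 + n - 1 by ring, show (N : ℤ) - n = N + 1 - n - 1 by ring,
    a1, b1, eP, em, ep, zpow_sub_one₀ hm1, zpow_add_one₀ hm1]
  push_cast
  generalize invQfac (Q ^ 2) (N + 1 + n) = a
  generalize invQfac (Q ^ 2) (N + 1 - n) = b
  generalize Q ^ (2 * N + 1) = X
  generalize Q ^ n = y at *
  field_simp
  ring

/-- The finite form of the triple product identity, as a (finitely supported) sum over `ℤ`. -/
lemma hasSum_jtpCoeff {Q w : ℂ} (hQ0 : Q ≠ 0) (hQ : ‖Q‖ < 1) (hw : w ≠ 0) (N : ℕ) :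
    HasSum (fun n : ℤ => jtpCoeff Q N n * w ^ n)
      (∏ k ∈ Finset.range N, ((1 - w * Q ^ (2 * k + 1)) * (1 - w⁻¹ * Q ^ (2 * k + 1)))) := by
  induction N with
  | zero =>
    convert hasSum_single (f := fun n : ℤ => jtpCoeff Q 0 n * w ^ n) 0 ?_ using 1
    · simp [jtpCoeff, qfac, invQfac]
    · intro n hn
      have : invQfac (Q ^ 2) n = 0 ∨ invQfac (Q ^ 2) (-n) = 0 := by
        rcases lt_or_gt_of_ne hn with h | h
        · exact Or.inl (if_pos h)
        · exact Or.inr (if_pos (by omega))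
      rcases this with h | h <;> simp [jtpCoeff, h]
  | succ N ih =>
    rw [Finset.prod_range_succ]
    generalize ∏ k ∈ Finset.range N,
      ((1 - w * Q ^ (2 * k + 1)) * (1 - w⁻¹ * Q ^ (2 * k + 1))) = R at ih ⊢
    have h1 := (Equiv.subRight (1 : ℤ)).hasSum_iff.2 ih
    have h2 := (Equiv.addRight (1 : ℤ)).hasSum_iff.2 ih
    have h3 := (ih.mul_left (1 + (Q ^ (2 * N + 1)) ^ 2)).sub
      (((h1.mul_left w).add (h2.mul_left w⁻¹)).mul_left (Q ^ (2 * N + 1)))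
    have hf : (fun n : ℤ => jtpCoeff Q (N + 1) n * w ^ n) = fun n : ℤ =>
        (1 + (Q ^ (2 * N + 1)) ^ 2) * (jtpCoeff Q N n * w ^ n) - Q ^ (2 * N + 1) *
          (w * (jtpCoeff Q N (n - 1) * w ^ (n - 1))
            + w⁻¹ * (jtpCoeff Q N (n + 1) * w ^ (n + 1))) := by
      ext n
      rw [jtpCoeff_succ hQ0 hQ, zpow_sub_one₀ hw, zpow_add_one₀ hw]
      field_simp
    have hv : R * ((1 - w * Q ^ (2 * N + 1)) * (1 - w⁻¹ * Q ^ (2 * N + 1)))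
        = (1 + (Q ^ (2 * N + 1)) ^ 2) * R - Q ^ (2 * N + 1) * (w * R + w⁻¹ * R) := by
      linear_combination (R * (Q ^ (2 * N + 1)) ^ 2) * mul_inv_cancel₀ hw
    rw [hf, hv]
    exact h3

/-- The Jacobi triple product, obtained from its finite form by dominated convergence: the
coefficients tend to `(-1)^n Q^(n²) / (Q²; Q²)_∞` and are uniformly `O(|Q|^(n²))`. -/
theorem jacobi_triple {Q w : ℂ} (hQ0 : Q ≠ 0) (hQ : ‖Q‖ < 1) (hw : w ≠ 0)
    (hs : Summable fun n : ℤ => ‖Q ^ (n ^ 2) * w ^ n‖) :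
    ∑' n : ℤ, (-1) ^ n * (Q ^ (n ^ 2) * w ^ n)
      = qp (Q ^ 2) (Q ^ 2) * (qp (w * Q) (Q ^ 2) * qp (w⁻¹ * Q) (Q ^ 2)) := by
  have hp : ‖Q ^ 2‖ < 1 := by
    rw [norm_pow]; exact pow_lt_one₀ (norm_nonneg _) hQ two_ne_zero
  have hP := qp_ne_zero hp hp
  obtain ⟨D, hD, hD'⟩ := exists_invQfac_bound hp
  have hD0 : 0 ≤ D := (norm_nonneg _).trans (hD 0)
  have lim1 : Filter.Tendsto (fun N : ℕ => ∑' n : ℤ, jtpCoeff Q N n * w ^ n) Filter.atTop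
      (nhds (∑' n : ℤ, (qp (Q ^ 2) (Q ^ 2))⁻¹ * ((-1) ^ n * (Q ^ (n ^ 2) * w ^ n)))) := by
    refine tendsto_tsum_of_dominated_convergence (hs.mul_left (D * D * D)) (fun n => ?_)
      (Filter.Eventually.of_forall fun N n => ?_)
    · have t1 : Filter.Tendsto (fun N : ℕ => (N : ℤ) + n) Filter.atTop Filter.atTop :=
        Filter.tendsto_atTop_add_const_right _ _ tendsto_natCast_atTop_atTop
      have t2 : Filter.Tendsto (fun N : ℕ => (N : ℤ) - n) Filter.atTop Filter.atTop :=
        Filter.tendsto_atTop_add_const_right _ _ tendsto_natCast_atTop_atTop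
      have t3 : Filter.Tendsto (fun N : ℕ => 2 * N) Filter.atTop Filter.atTop :=
        Filter.tendsto_id.const_mul_atTop' two_pos
      have t := (((((tendsto_qfac hp).comp t3).mul ((tendsto_invQfac hp).comp t1)).mul
        ((tendsto_invQfac hp).comp t2)).const_mul ((-1) ^ n * Q ^ (n ^ 2))).mul_const (w ^ n)
      have hlim : (qp (Q ^ 2) (Q ^ 2))⁻¹ * ((-1) ^ n * (Q ^ (n ^ 2) * w ^ n))
          = (-1) ^ n * Q ^ (n ^ 2) * (qp (Q ^ 2) (Q ^ 2) * (qp (Q ^ 2) (Q ^ 2))⁻¹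
            * (qp (Q ^ 2) (Q ^ 2))⁻¹) * w ^ n := by
        rw [mul_inv_cancel₀ hP]
        ring
      rw [hlim]
      exact t
    · have : ‖qfac (Q ^ 2) (2 * N)‖ * ‖invQfac (Q ^ 2) (N + n)‖ * ‖invQfac (Q ^ 2) (N - n)‖
          ≤ D * D * D := by gcongr <;> simp only [hD, hD']
      calc ‖jtpCoeff Q N n * w ^ n‖ = ‖qfac (Q ^ 2) (2 * N)‖ * ‖invQfac (Q ^ 2) (N + n)‖ *
            ‖invQfac (Q ^ 2) (N - n)‖ * ‖Q ^ (n ^ 2) * w ^ n‖ := by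
            simp only [jtpCoeff, norm_mul, norm_zpow, norm_neg, norm_one, one_zpow]; ring
        _ ≤ _ := by gcongr
  have lim2 := (multipliable_qp hp (w * Q)).tendsto_prod_tprod_nat.mul
    (multipliable_qp hp (w⁻¹ * Q)).tendsto_prod_tprod_nat
  have heq : ∀ N : ℕ, ∑' n : ℤ, jtpCoeff Q N n * w ^ n
      = (∏ k ∈ Finset.range N, (1 - w * Q * (Q ^ 2) ^ k))
        * ∏ k ∈ Finset.range N, (1 - w⁻¹ * Q * (Q ^ 2) ^ k) := by
    intro N
    rw [(hasSum_jtpCoeff hQ0 hQ hw N).tsum_eq, ← Finset.prod_mul_distrib]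
    refine Finset.prod_congr rfl fun k _ => ?_
    rw [← pow_mul]
    ring
  simp only [heq] at lim1
  have := tendsto_nhds_unique lim1 lim2
  rw [tsum_mul_left, inv_mul_eq_iff_eq_mul₀ hP] at this
  exact this

lemma thA_eq_prod {q : ℂ} (hq0 : q ≠ 0) (hq : ‖q‖ < 1) (c j i : ℕ) (hj : j = c + 5)
    (hi : i + c = 5) :
    thA q c = qp (q ^ 10) (q ^ 10) * (qp (q ^ j) (q ^ 10) * qp (q ^ i) (q ^ 10)) := by
  have e : ∀ n : ℤ, (q ^ 5) ^ (n ^ 2) * (q ^ c) ^ n = q ^ (5 * n ^ 2 + c * n) := fun n => by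
    rw [← zpow_natCast q 5, ← zpow_natCast q c, ← zpow_mul, ← zpow_mul, ← zpow_add₀ hq0]
    rfl
  have h := jacobi_triple (Q := q ^ 5) (w := q ^ c) (pow_ne_zero _ hq0)
    (by rw [norm_pow]; exact pow_lt_one₀ (norm_nonneg _) hq (by norm_num)) (pow_ne_zero _ hq0)
    (by simpa only [e] using summable_norm_theta hq0 hq (by norm_num : (0 : ℤ) < 5) c)
  simp only [e] at h
  have e1 : q ^ c * q ^ 5 = q ^ j := by rw [hj, pow_add]
  have e2 : (q ^ c)⁻¹ * q ^ 5 = q ^ i := by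
    rw [← hi, pow_add]
    field_simp
  rw [thA, h, e1, e2, ← pow_mul]

/-! ### The identity for `k` -/

theorem stmt6 (q : ℂ) (hq : ‖q‖ < 1) :
    phi (-q) ^ 2 / phi (-(q ^ 5)) ^ 2 =
      (1 - 4 * (q * RR q * RR (q ^ 2) ^ 2) - (q * RR q * RR (q ^ 2) ^ 2) ^ 2) /
        (1 - (q * RR q * RR (q ^ 2) ^ 2) ^ 2) := by
  rcases eq_or_ne q 0 with rfl | hq0
  · have h : phi 0 = 1 := by
      unfold phi
      rw [tsum_eq_single 0] <;> simp
    simp [h]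
  have hpow : ∀ j : ℕ, j ≠ 0 → ‖q ^ j‖ < 1 := fun j hj => by
    rw [norm_pow]; exact pow_lt_one₀ (norm_nonneg _) hq hj
  have h10 := hpow 10 (by norm_num)
  have ne : ∀ j : ℕ, j ≠ 0 → qp (q ^ j) (q ^ 10) ≠ 0 := fun j hj => qp_ne_zero h10 (hpow j hj)
  have split : ∀ j : ℕ, qp (q ^ j) (q ^ 5) = qp (q ^ j) (q ^ 10) * qp (q ^ (j + 5)) (q ^ 10) :=
    fun j => by rw [qp_split (hpow 5 (by norm_num)), ← pow_mul, ← pow_add]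
  have p0 := thA_eq_prod hq0 hq 0 5 5 rfl rfl
  have p1 := thA_eq_prod hq0 hq 1 6 4 rfl rfl
  have p2 := thA_eq_prod hq0 hq 2 7 3 rfl rfl
  have p3 := thA_eq_prod hq0 hq 3 8 2 rfl rfl
  have p4 := thA_eq_prod hq0 hq 4 9 1 rfl rfl
  have rel := theta_relation hq0 hq
  have dis := phi_sq_dissection hq0 hq
  push_cast at p0 p1 p2 p3 p4
  have ne1 := ne 1 (by norm_num)
  have ne2 := ne 2 (by norm_num)
  have ne3 := ne 3 (by norm_num)
  have ne4 := ne 4 (by norm_num)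
  have ne5 := ne 5 (by norm_num)
  have ne6 := ne 6 (by norm_num)
  have ne7 := ne 7 (by norm_num)
  have ne8 := ne 8 (by norm_num)
  have ne9 := ne 9 (by norm_num)
  have ne10 := ne 10 (by norm_num)
  have hA0 : thA q 0 ≠ 0 := by rw [p0]; simp [ne5, ne10]
  have hA1 : thA q 1 ≠ 0 := by rw [p1]; simp [ne4, ne6, ne10]
  have hA2 : thA q 2 ≠ 0 := by rw [p2]; simp [ne3, ne7, ne10]
  have hA3 : thA q 3 ≠ 0 := by rw [p3]; simp [ne2, ne8, ne10]
  have hk : q * RR q * RR (q ^ 2) ^ 2 = q * (thA q 4 * thA q 3) / (thA q 2 * thA q 1) := by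
    have s1 := split 1
    have s4 := split 4
    have s2 := split 2
    have s3 := split 3
    norm_num at s1 s4 s2 s3
    unfold RR
    simp only [← pow_mul]
    norm_num
    rw [s1, s2, s3, s4, p1, p2, p3, p4]
    norm_num at ne1 ⊢
    field_simp
  rw [phi_neg_pow_five, dis, hk]
  -- This shows in particular that `1 - k²` is not zero, so the quotient is not a junk value.
  have hden : 1 - (q * (thA q 4 * thA q 3) / (thA q 2 * thA q 1)) ^ 2
      = thA q 3 * thA q 1 * thA q 0 ^ 2 / (thA q 2 * thA q 1) ^ 2 := by
    rw [← rel]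
    field_simp
  rw [sub_right_comm, hden]
  field_simp
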